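/- Let π* be an optimal assignment for weights w and let Δ^k be the iterates of the recursive sensitivity algorithm. Then the iterates are uniformly bounded by the original element-wise sensitivities: |Δ^k(a,b)| ≤ |s_w(a,b)| for every edge (a,b) and every k. -/

import Mathlib

open Finset Filter Topology

/-- Cost of an assignment `π : T → A` under weights `w : A × T → ℝ`. -/
noncomputable def cost {A T : Type*} [Fintype T] (w : A × T → ℝ) (π : T → A) : ℝ :=
  ∑ b : T, w (π b, b)

/-- `πs` is an optimal assignment for weights `w`: it is injective (an assignment)
and minimizes the cost among all assignments. -/
def Optimal {A T : Type*} [Fintype T] (w : A × T → ℝ) (πs : T → A) : Prop :=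
  Function.Injective πs ∧ ∀ π : T → A, Function.Injective π → cost w πs ≤ cost w π

/-- `δ` is an allowable perturbation for `(w, πs)`: `πs` remains optimal for `w + δ`. -/
def Allowable {A T : Type*} [Fintype T] (w δ : A × T → ℝ) (πs : T → A) : Prop :=
  Optimal (w + δ) πs

-- The element-wise sensitivity of edge `(a, b)` for weights `w` and assignment `πs`.
open Classical in
noncomputable def sens {A T : Type*} [Fintype T] (w : A × T → ℝ) (πs : T → A)
    (a : A) (b : T) : ℝ :=
  if πs b = a then
    sInf {c | ∃ π : T → A, Function.Injective π ∧ π b ≠ a ∧ cost w π = c} - cost w πs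
  else
    cost w πs - sInf {c | ∃ π : T → A, Function.Injective π ∧ π b = a ∧ cost w π = c}

/-- Iterates of the recursive sensitivity algorithm: `Δ⁰ = 0` and
`Δ^{k+1}(a,b) = Δ^k(a,b) + s_{w+Δ^k}(a,b)/(2N)` with `N = |T|`. -/
noncomputable def iter {A T : Type*} [Fintype T] (w : A × T → ℝ) (πs : T → A) :
    ℕ → (A × T → ℝ)
  | 0 => 0
  | k + 1 => fun e =>
      iter w πs k e + sens (w + iter w πs k) πs e.1 e.2 / (2 * (Fintype.card T : ℝ))

/-!
For an optimal `πs`, `|s_w(a,b)|` is the least extra cost of an assignment that disagrees with `πs`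
on the edge `(a,b)`. Two estimates follow. If `|δ| ≤ |s_w| / (2N)` on every edge, then in replacing
`πs` by `π` each of the `N` tasks changes the perturbation's contribution by at most `1/N` of the
gap `f(w,π) - f(w,πs)`, so `δ` is allowable; applied to `w + Δ^k`, this makes every iterate
allowable. Conversely, if `δ` is allowable, nonnegative on assigned edges and nonpositive on the
others, then the differences `δ(πs(b),b) - δ(π(b),b)` are nonnegative and their sum is at most the
gap, so each single one is, which gives `|δ| ≤ |s_w|`. The iterates have these signs, being sums of
nonnegative multiples of sensitivities of an optimal assignment.
-/

section Disagreement

variable {A T : Type*} {π πs : T → A} {a : A} {b : T}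

/-- Exactly one of the assignments `π` and `πs` assigns the edge `(a, b)`. This treats the two cases
in the definition of `sens` uniformly. -/
def DisagreeOn (π πs : T → A) (a : A) (b : T) : Prop :=
  ¬(π b = a ↔ πs b = a)

lemma disagreeOn_iff : DisagreeOn π πs a b ↔ πs b ≠ π b ∧ (a = πs b ∨ a = π b) := by
  grind [DisagreeOn]

lemma exists_injective_apply_eq (hπs : Function.Injective πs) (a : A) (b : T) :
    ∃ π : T → A, Function.Injective π ∧ π b = a := by
  classical
  exact ⟨Equiv.swap (πs b) a ∘ πs, (Equiv.injective _).comp hπs, by simp⟩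

lemma exists_injective_disagreeOn [Nontrivial A] (hπs : Function.Injective πs) (a : A) (b : T) :
    ∃ π : T → A, Function.Injective π ∧ DisagreeOn π πs a b := by
  by_cases hab : πs b = a
  · obtain ⟨c, hc⟩ := exists_ne a
    obtain ⟨π, hπ, rfl⟩ := exists_injective_apply_eq hπs c b
    exact ⟨π, hπ, by simp [DisagreeOn, hab, hc]⟩
  · obtain ⟨π, hπ, hπb⟩ := exists_injective_apply_eq hπs a b
    exact ⟨π, hπ, by simp [DisagreeOn, hab, hπb]⟩

end Disagreement

section Margin

variable {A T : Type*} [Fintype T] {w : A × T → ℝ} {π πs : T → A} {a : A} {b : T}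

/-- The margin of the edge `(a, b)`: the least extra cost, relative to `πs`, of an assignment that
disagrees with `πs` on `(a, b)`. It is the sensitivity up to sign; like `sens` it is an infimum in
`ℝ`, with a junk value if no assignment disagrees with `πs` on `(a, b)`. -/
noncomputable def margin (w : A × T → ℝ) (πs : T → A) (a : A) (b : T) : ℝ :=
  sInf {c | ∃ π : T → A, Function.Injective π ∧ DisagreeOn π πs a b ∧ cost w π = c} - cost w πs

lemma sens_of_eq (hab : πs b = a) : sens w πs a b = margin w πs a b := by
  simp [sens, margin, DisagreeOn, hab]

lemma sens_of_ne (hab : πs b ≠ a) : sens w πs a b = -margin w πs a b := by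
  simp [sens, margin, DisagreeOn, hab]

lemma abs_sens_eq_abs_margin : |sens w πs a b| = |margin w πs a b| := by
  by_cases hab : πs b = a
  · rw [sens_of_eq hab]
  · rw [sens_of_ne hab, abs_neg]

lemma Optimal.le_margin_iff [Nontrivial A] (h : Optimal w πs) {x : ℝ} :
    x ≤ margin w πs a b ↔
      ∀ π : T → A, Function.Injective π → DisagreeOn π πs a b → x ≤ cost w π - cost w πs := by
  obtain ⟨π₀, hπ₀, hdis₀⟩ := exists_injective_disagreeOn h.1 a b
  have hbdd : BddBelow
      {c | ∃ π : T → A, Function.Injective π ∧ DisagreeOn π πs a b ∧ cost w π = c} := by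
    refine ⟨cost w πs, ?_⟩
    rintro _ ⟨π, hπ, -, rfl⟩
    exact h.2 π hπ
  rw [margin, le_sub_iff_add_le, le_csInf_iff hbdd ⟨_, π₀, hπ₀, hdis₀, rfl⟩]
  constructor
  · intro hx π hπ hdis
    exact le_sub_iff_add_le.2 (hx _ ⟨π, hπ, hdis, rfl⟩)
  · rintro hx _ ⟨π, hπ, hdis, rfl⟩
    exact le_sub_iff_add_le.1 (hx π hπ hdis)

lemma Optimal.margin_nonneg [Nontrivial A] (h : Optimal w πs) : 0 ≤ margin w πs a b :=
  h.le_margin_iff.2 fun π hπ _ => sub_nonneg.2 (h.2 π hπ)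

lemma Optimal.le_abs_sens_iff [Nontrivial A] (h : Optimal w πs) {x : ℝ} :
    x ≤ |sens w πs a b| ↔
      ∀ π : T → A, Function.Injective π → DisagreeOn π πs a b → x ≤ cost w π - cost w πs := by
  rw [abs_sens_eq_abs_margin, abs_of_nonneg h.margin_nonneg, h.le_margin_iff]

lemma Optimal.abs_sens_le_cost_sub (h : Optimal w πs) (hπ : Function.Injective π)
    (hdis : DisagreeOn π πs a b) : |sens w πs a b| ≤ cost w π - cost w πs := by
  have : Nontrivial A := ⟨πs b, π b, (disagreeOn_iff.1 hdis).1⟩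
  exact h.le_abs_sens_iff.1 le_rfl π hπ hdis

end Margin

section Allowable

variable {A T : Type*} [Fintype T] {w δ : A × T → ℝ} {π πs : T → A}

lemma cost_add (w δ : A × T → ℝ) (π : T → A) : cost (w + δ) π = cost w π + cost δ π :=
  Finset.sum_add_distrib

lemma cost_sub_cost (w : A × T → ℝ) (π π' : T → A) :
    cost w π - cost w π' = ∑ b, (w (π b, b) - w (π' b, b)) :=
  (Finset.sum_sub_distrib _ _).symm

lemma allowable_iff : Allowable w δ πs ↔ Function.Injective πs ∧
    ∀ π : T → A, Function.Injective π → cost δ πs - cost δ π ≤ cost w π - cost w πs := by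
  simp only [Allowable, Optimal, cost_add, sub_le_sub_iff, add_comm]

lemma Optimal.apply_sub_apply_le_div_card (h : Optimal w πs)
    (hδ : ∀ a b, |δ (a, b)| ≤ |sens w πs a b| / (2 * Fintype.card T))
    (hπ : Function.Injective π) (b : T) :
    δ (πs b, b) - δ (π b, b) ≤ (cost w π - cost w πs) / Fintype.card T := by
  by_cases hb : πs b = π b
  · rw [hb, sub_self]
    exact div_nonneg (sub_nonneg.2 (h.2 π hπ)) (Nat.cast_nonneg _)
  have hassigned := h.abs_sens_le_cost_sub hπ (disagreeOn_iff.2 ⟨hb, .inl rfl⟩)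
  have hunassigned := h.abs_sens_le_cost_sub hπ (disagreeOn_iff.2 ⟨hb, .inr rfl⟩)
  calc δ (πs b, b) - δ (π b, b)
      ≤ |δ (πs b, b)| + |δ (π b, b)| := (le_abs_self _).trans (abs_sub _ _)
    _ ≤ |sens w πs (πs b) b| / (2 * Fintype.card T) +
          |sens w πs (π b) b| / (2 * Fintype.card T) := add_le_add (hδ _ _) (hδ _ _)
    _ ≤ (cost w π - cost w πs) / (2 * Fintype.card T) +
          (cost w π - cost w πs) / (2 * Fintype.card T) := by gcongr
    _ = (cost w π - cost w πs) / Fintype.card T := by ring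

theorem Optimal.allowable_of_abs_le (h : Optimal w πs)
    (hδ : ∀ a b, |δ (a, b)| ≤ |sens w πs a b| / (2 * Fintype.card T)) : Allowable w δ πs := by
  refine allowable_iff.2 ⟨h.1, fun π hπ => ?_⟩
  calc cost δ πs - cost δ π
      = ∑ b, (δ (πs b, b) - δ (π b, b)) := cost_sub_cost δ πs π
    _ ≤ ∑ _b : T, (cost w π - cost w πs) / Fintype.card T :=
        Finset.sum_le_sum fun b _ => h.apply_sub_apply_le_div_card hδ hπ b
    _ = (cost w π - cost w πs) * (Fintype.card T / Fintype.card T) := by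
        rw [Finset.sum_const, Finset.card_univ, nsmul_eq_mul, mul_div_left_comm]
    _ ≤ cost w π - cost w πs :=
        mul_le_of_le_one_right (sub_nonneg.2 (h.2 π hπ)) (div_self_le_one _)

end Allowable

section SignCompatible

variable {A T : Type*} {w δ ε : A × T → ℝ} {π πs : T → A}

/-- A perturbation that is nonnegative on the edges assigned by `πs` and nonpositive on all others,
like the sensitivities of an optimal assignment. -/
structure SignCompatible (πs : T → A) (δ : A × T → ℝ) : Prop where
  nonneg : ∀ b, 0 ≤ δ (πs b, b)
  nonpos : ∀ a b, πs b ≠ a → δ (a, b) ≤ 0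

namespace SignCompatible

lemma zero (πs : T → A) : SignCompatible πs 0 :=
  ⟨fun _ => le_rfl, fun _ _ _ => le_rfl⟩

lemma add (hδ : SignCompatible πs δ) (hε : SignCompatible πs ε) : SignCompatible πs (δ + ε) :=
  ⟨fun b => add_nonneg (hδ.nonneg b) (hε.nonneg b),
    fun a b hab => add_nonpos (hδ.nonpos a b hab) (hε.nonpos a b hab)⟩

lemma div_const (hδ : SignCompatible πs δ) {c : ℝ} (hc : 0 ≤ c) :
    SignCompatible πs fun e => δ e / c :=
  ⟨fun b => div_nonneg (hδ.nonneg b) hc,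
    fun a b hab => div_nonpos_of_nonpos_of_nonneg (hδ.nonpos a b hab) hc⟩

lemma apply_le_apply (hδ : SignCompatible πs δ) (a : A) (b : T) : δ (a, b) ≤ δ (πs b, b) := by
  by_cases hab : πs b = a
  · rw [hab]
  · exact (hδ.nonpos a b hab).trans (hδ.nonneg b)

lemma abs_le_apply_sub_apply (hδ : SignCompatible πs δ) {a : A} {b : T}
    (hdis : DisagreeOn π πs a b) : |δ (a, b)| ≤ δ (πs b, b) - δ (π b, b) := by
  obtain ⟨hb, rfl | rfl⟩ := disagreeOn_iff.1 hdis
  · rw [abs_of_nonneg (hδ.nonneg b)]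
    exact (le_sub_self_iff _).2 (hδ.nonpos _ b hb)
  · rw [abs_of_nonpos (hδ.nonpos _ b hb), neg_eq_zero_sub]
    exact sub_le_sub_right (hδ.nonneg b) _

variable [Fintype T]

lemma cost_le_cost (hδ : SignCompatible πs δ) (π : T → A) : cost δ π ≤ cost δ πs :=
  Finset.sum_le_sum fun b _ => hδ.apply_le_apply (π b) b

lemma apply_sub_apply_le_cost_sub (hδ : SignCompatible πs δ) (π : T → A) (b : T) :
    δ (πs b, b) - δ (π b, b) ≤ cost δ πs - cost δ π := by
  rw [cost_sub_cost]
  exact Finset.single_le_sum (f := fun b => δ (πs b, b) - δ (π b, b))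
    (fun b _ => sub_nonneg.2 (hδ.apply_le_apply (π b) b)) (Finset.mem_univ b)

lemma optimal_of_allowable (hδ : SignCompatible πs δ) (h : Allowable w δ πs) : Optimal w πs := by
  obtain ⟨hπs, hgap⟩ := allowable_iff.1 h
  exact ⟨hπs, fun π hπ => sub_nonneg.1 ((sub_nonneg.2 (hδ.cost_le_cost π)).trans (hgap π hπ))⟩

theorem abs_le_abs_sens [Nontrivial A] (hδ : SignCompatible πs δ) (h : Allowable w δ πs)
    (a : A) (b : T) : |δ (a, b)| ≤ |sens w πs a b| := by
  refine (hδ.optimal_of_allowable h).le_abs_sens_iff.2 fun π hπ hdis => ?_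
  calc |δ (a, b)| ≤ δ (πs b, b) - δ (π b, b) := hδ.abs_le_apply_sub_apply hdis
    _ ≤ cost δ πs - cost δ π := hδ.apply_sub_apply_le_cost_sub π b
    _ ≤ cost w π - cost w πs := (allowable_iff.1 h).2 π hπ

end SignCompatible

lemma Optimal.signCompatible_sens [Fintype T] [Nontrivial A] (h : Optimal w πs) :
    SignCompatible πs fun e => sens w πs e.1 e.2 where
  nonneg _ := h.margin_nonneg.trans_eq (sens_of_eq rfl).symm
  nonpos _ _ hab := (sens_of_ne hab).trans_le (neg_nonpos.2 h.margin_nonneg)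

end SignCompatible

section Iteration

variable {A T : Type*} [Fintype T] {w : A × T → ℝ} {πs : T → A}

lemma iter_succ (w : A × T → ℝ) (πs : T → A) (k : ℕ) :
    iter w πs (k + 1) =
      iter w πs k + fun e => sens (w + iter w πs k) πs e.1 e.2 / (2 * Fintype.card T) :=
  rfl

lemma Optimal.allowable_sens_div (h : Optimal w πs) :
    Allowable w (fun e => sens w πs e.1 e.2 / (2 * Fintype.card T)) πs := by
  refine h.allowable_of_abs_le fun a b => ?_
  rw [abs_div, abs_of_nonneg (by positivity : (0 : ℝ) ≤ 2 * Fintype.card T)]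

lemma Optimal.allowable_iter (h : Optimal w πs) (k : ℕ) : Allowable w (iter w πs k) πs := by
  induction k with
  | zero => simpa only [Allowable, iter, add_zero] using h
  | succ k ih =>
    rw [Allowable, iter_succ, ← add_assoc]
    exact Optimal.allowable_sens_div ih

lemma Optimal.signCompatible_iter [Nontrivial A] (h : Optimal w πs) (k : ℕ) :
    SignCompatible πs (iter w πs k) := by
  induction k with
  | zero => exact .zero πs
  | succ k ih =>
    rw [iter_succ]
    have hk : Optimal (w + iter w πs k) πs := h.allowable_iter k
    exact ih.add (hk.signCompatible_sens.div_const (by positivity))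

end Iteration

theorem stmt14_general {A T : Type*} [Fintype T] [Nontrivial A] {w : A × T → ℝ} {πs : T → A}
    (hopt : Optimal w πs) (k : ℕ) (a : A) (b : T) : |iter w πs k (a, b)| ≤ |sens w πs a b| :=
  (hopt.signCompatible_iter k).abs_le_abs_sens (hopt.allowable_iter k) a b

theorem stmt14 {A T : Type*} [Fintype A] [Fintype T] [Nonempty A] [Nonempty T]
    (hT : 2 ≤ Fintype.card T) (hAT : Fintype.card T ≤ Fintype.card A)
    (w : A × T → ℝ) (πs : T → A)
    (hopt : Optimal w πs) :
    ∀ (k : ℕ) (a : A) (b : T), |iter w πs k (a, b)| ≤ |sens w πs a b| := by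
  have : Nontrivial A := Fintype.one_lt_card_iff_nontrivial.1 (hT.trans hAT)
  exact stmt14_general hopt
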